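/- Let s ≥ 3 be an integer, q₀ = 2^s and q = 2q₀². For nonnegative integers a₁,a₂,a₃,a₄,f write σ = a₁+a₂+a₃+a₄+f and ν = a₁ + a₂q₀ + 2a₃q₀ + a₄q + fq², and let F₄ = {ν+(2n+2)q₀q+n+3 : 0≤n≤q₀−3, 0≤a₁≤q₀−3−n, 0≤a₂≤1, 0≤a₃≤q₀−1, 0≤a₄≤q₀−1, f≥0, σ=q−2q₀−2−2nq₀+n} and F₆ = {ν+q₀+(2n+2)q₀q+n+2 : a₁=0, a₂=0, 0≤n≤q₀−2, 0≤a₃≤n, 0≤a₄≤q₀−1, f≥0, σ=q−2q₀−2−2nq₀+n}. Then |F₄| = q²/4 − 3q·q₀/2 + q (i.e. 4·|F₄| = q² − 6q·q₀ + 4q) and |F₆| = q·q₀/4 − q/4 (i.e. 4·|F₆| = q·q₀ − q). -/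

import Mathlib

/-- `ν = a₁ + a₂q₀ + 2a₃q₀ + a₄q + fq²`. -/
def nuF (q₀ q a₁ a₂ a₃ a₄ f : ℕ) : ℕ :=
  a₁ + a₂ * q₀ + 2 * a₃ * q₀ + a₄ * q + f * q ^ 2

/-- `F₄ = {ν+(2n+2)q₀q+n+3 : 0≤n≤q₀−3, 0≤a₁≤q₀−3−n, 0≤a₂≤1, 0≤a₃≤q₀−1,
0≤a₄≤q₀−1, f≥0, σ=q−2q₀−2−2nq₀+n}`. -/
def F4 (q₀ q : ℕ) : Set ℕ :=
  {v | ∃ n a₁ a₂ a₃ a₄ f : ℕ,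
    n + 3 ≤ q₀ ∧ a₁ + n + 3 ≤ q₀ ∧ a₂ ≤ 1 ∧ a₃ + 1 ≤ q₀ ∧ a₄ + 1 ≤ q₀ ∧
    a₁ + a₂ + a₃ + a₄ + f + 2 * q₀ + 2 + 2 * n * q₀ = q + n ∧
    v = nuF q₀ q a₁ a₂ a₃ a₄ f + (2 * n + 2) * q₀ * q + n + 3}

/-- `F₆ = {ν+q₀+(2n+2)q₀q+n+2 : a₁=0, a₂=0, 0≤n≤q₀−2, 0≤a₃≤n, 0≤a₄≤q₀−1,
f≥0, σ=q−2q₀−2−2nq₀+n}`. -/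
def F6 (q₀ q : ℕ) : Set ℕ :=
  {v | ∃ n a₁ a₂ a₃ a₄ f : ℕ,
    a₁ = 0 ∧ a₂ = 0 ∧ n + 2 ≤ q₀ ∧ a₃ ≤ n ∧ a₄ + 1 ≤ q₀ ∧
    a₁ + a₂ + a₃ + a₄ + f + 2 * q₀ + 2 + 2 * n * q₀ = q + n ∧
    v = nuF q₀ q a₁ a₂ a₃ a₄ f + q₀ + (2 * n + 2) * q₀ * q + n + 2}


lemma radix19 {k a b x y : ℕ} (ha : a < k) (hb : b < k) (h : a + k * x = b + k * y) :
    a = b ∧ x = y := by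
  have h1 : a = b := by
    have := congrArg (· % k) h
    simpa [Nat.add_mul_mod_self_left, Nat.mod_eq_of_lt ha, Nat.mod_eq_of_lt hb] using this
  subst h1
  exact ⟨rfl, Nat.eq_of_mul_eq_mul_left (by omega) (Nat.add_left_cancel h)⟩

lemma digits19 {k b c d e f b' c' d' e' f' : ℕ} (hb : b < k) (hb' : b' < k)
    (hc : c < 2 * k) (hc' : c' < 2 * k) (hd : d < k) (hd' : d' < k)
    (he : e < 2 * k) (he' : e' < 2 * k)
    (h : b + k * (c + (2 * k) * (d + k * (e + (2 * k) * f)))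
      = b' + k * (c' + (2 * k) * (d' + k * (e' + (2 * k) * f')))) :
    b = b' ∧ c = c' ∧ d = d' ∧ e = e' ∧ f = f' := by
  obtain ⟨h1, h⟩ := radix19 hb hb' h
  obtain ⟨h2, h⟩ := radix19 hc hc' h
  obtain ⟨h3, h⟩ := radix19 hd hd' h
  obtain ⟨h4, h⟩ := radix19 he he' h
  exact ⟨h1, h2, h3, h4, h⟩

lemma sum19a (m : ℕ) : 2 * ∑ n ∈ Finset.range m, (m - n) = m * (m + 1) := by
  induction m with
  | zero => simp
  | succ m ih =>
    rw [Finset.sum_range_succ']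
    simp only [Nat.add_sub_add_right, Nat.sub_zero, Nat.mul_add, ih]
    ring

lemma sum19b (m : ℕ) : 2 * ∑ n ∈ Finset.range m, (n + 1) = m * (m + 1) := by
  induction m with
  | zero => simp
  | succ m ih =>
    rw [Finset.sum_range_succ, Nat.mul_add, ih]
    ring

def T4 (k : ℕ) : Finset (Σ _ : ℕ, ℕ × ℕ × ℕ × ℕ) :=
  (Finset.range (k - 2)).sigma fun n =>
    Finset.range (k - 2 - n) ×ˢ Finset.range 2 ×ˢ Finset.range k ×ˢ Finset.range k

def g4 (k : ℕ) (t : Σ _ : ℕ, ℕ × ℕ × ℕ × ℕ) : ℕ :=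
  nuF k (2 * k ^ 2) t.2.1 t.2.2.1 t.2.2.2.1 t.2.2.2.2
    (2 * k ^ 2 + t.1 - (t.2.1 + t.2.2.1 + t.2.2.2.1 + t.2.2.2.2 + 2 * k + 2 + 2 * t.1 * k))
    + (2 * t.1 + 2) * k * (2 * k ^ 2) + t.1 + 3

def T6 (k : ℕ) : Finset (Σ _ : ℕ, ℕ × ℕ) :=
  (Finset.range (k - 1)).sigma fun n => Finset.range (n + 1) ×ˢ Finset.range k

def g6 (k : ℕ) (t : Σ _ : ℕ, ℕ × ℕ) : ℕ :=
  nuF k (2 * k ^ 2) 0 0 t.2.1 t.2.2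
    (2 * k ^ 2 + t.1 - (t.2.1 + t.2.2 + 2 * k + 2 + 2 * t.1 * k))
    + k + (2 * t.1 + 2) * k * (2 * k ^ 2) + t.1 + 2

lemma F4_eq (k : ℕ) (hk : 3 ≤ k) : F4 k (2 * k ^ 2) = ((T4 k).image (g4 k) : Set ℕ) := by
  ext v
  simp only [F4, Set.mem_ofPred_eq, Set.mem_image, Finset.mem_coe, T4, Finset.mem_sigma,
    Finset.mem_product, Finset.mem_range, Finset.coe_image]
  constructor
  · rintro ⟨n, a1, a2, a3, a4, f, h1, h2, h3, h4, h5, h6, rfl⟩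
    refine ⟨⟨n, a1, a2, a3, a4⟩, ⟨by dsimp only; omega, by dsimp only; omega, by dsimp only; omega,
      by dsimp only; omega, by dsimp only; omega⟩, ?_⟩
    simp only [g4]
    have : 2 * k ^ 2 + n - (a1 + a2 + a3 + a4 + 2 * k + 2 + 2 * n * k) = f := by omega
    rw [this]
  · rintro ⟨⟨n, a1, a2, a3, a4⟩, ⟨h1, h2, h3, h4, h5⟩, rfl⟩
    dsimp only at h1 h2 h3 h4 h5
    refine ⟨n, a1, a2, a3, a4, _, by omega, by omega, by omega, by omega, by omega, ?_, rfl⟩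
    obtain ⟨j, rfl⟩ : ∃ j, k = n + 3 + j := ⟨k - (n + 3), by omega⟩
    have : a1 + a2 + a3 + a4 + 2 * (n + 3 + j) + 2 + 2 * n * (n + 3 + j)
        ≤ 2 * (n + 3 + j) ^ 2 + n := by
      have e1 : a1 + a2 + a3 + a4 ≤ j + 1 + 2 * (n + 2 + j) := by omega
      nlinarith [Nat.zero_le (n * j), Nat.zero_le (j * j)]
    dsimp only
    omega

lemma F6_eq (k : ℕ) (hk : 3 ≤ k) : F6 k (2 * k ^ 2) = ((T6 k).image (g6 k) : Set ℕ) := by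
  ext v
  simp only [F6, Set.mem_ofPred_eq, Set.mem_image, Finset.mem_coe, T6, Finset.mem_sigma,
    Finset.mem_product, Finset.mem_range, Finset.coe_image]
  constructor
  · rintro ⟨n, a1, a2, a3, a4, f, rfl, rfl, h1, h2, h3, h6, rfl⟩
    refine ⟨⟨n, a3, a4⟩, ⟨by dsimp only; omega, by dsimp only; omega, by dsimp only; omega⟩, ?_⟩
    simp only [g6]
    have : 2 * k ^ 2 + n - (a3 + a4 + 2 * k + 2 + 2 * n * k) = f := by omega
    rw [this]
  · rintro ⟨⟨n, a3, a4⟩, ⟨h1, h2, h3⟩, rfl⟩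
    dsimp only at h1 h2 h3
    refine ⟨n, 0, 0, a3, a4, _, rfl, rfl, by omega, by omega, by omega, ?_, rfl⟩
    obtain ⟨j, rfl⟩ : ∃ j, k = n + 2 + j := ⟨k - (n + 2), by omega⟩
    have : a3 + a4 + 2 * (n + 2 + j) + 2 + 2 * n * (n + 2 + j)
        ≤ 2 * (n + 2 + j) ^ 2 + n := by
      have e1 : a3 + a4 ≤ n + (n + 1 + j) := by omega
      nlinarith [Nat.zero_le (n * j), Nat.zero_le (j * j)]
    dsimp only
    omega

lemma g4_inj (k : ℕ) : Set.InjOn (g4 k) (T4 k : Set (Σ _ : ℕ, ℕ × ℕ × ℕ × ℕ)) := by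
  rintro ⟨n, a1, a2, a3, a4⟩ h ⟨n', a1', a2', a3', a4'⟩ h' heq
  simp only [Finset.mem_coe, T4, Finset.mem_sigma, Finset.mem_product, Finset.mem_range] at h h'
  obtain ⟨h1, h2, h3, h4, h5⟩ := h
  obtain ⟨h1', h2', h3', h4', h5'⟩ := h'
  simp only [g4, nuF] at heq
  generalize 2 * k ^ 2 + n - (a1 + a2 + a3 + a4 + 2 * k + 2 + 2 * n * k) = f at heq
  generalize 2 * k ^ 2 + n' - (a1' + a2' + a3' + a4' + 2 * k + 2 + 2 * n' * k) = f' at heq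
  have := digits19 (k := k) (b := a1 + n + 2) (b' := a1' + n' + 2) (c := a2 + 2 * a3)
    (c' := a2' + 2 * a3') (d := a4) (d' := a4') (e := 2 * n + 2) (e' := 2 * n' + 2)
    (f := f) (f' := f') (by omega) (by omega) (by omega) (by omega) (by omega) (by omega)
    (by omega) (by omega) (by linarith)
  obtain ⟨e1, e2, e3, e4, e5⟩ := this
  obtain rfl : n = n' := by omega
  obtain rfl : a1 = a1' := by omega
  obtain rfl : a2 = a2' := by omega
  obtain rfl : a3 = a3' := by omega
  subst e3
  rfl

lemma g6_inj (k : ℕ) : Set.InjOn (g6 k) (T6 k : Set (Σ _ : ℕ, ℕ × ℕ)) := by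
  rintro ⟨n, a3, a4⟩ h ⟨n', a3', a4'⟩ h' heq
  simp only [Finset.mem_coe, T6, Finset.mem_sigma, Finset.mem_product, Finset.mem_range] at h h'
  obtain ⟨h1, h4, h5⟩ := h
  obtain ⟨h1', h4', h5'⟩ := h'
  simp only [g6, nuF] at heq
  generalize 2 * k ^ 2 + n - (a3 + a4 + 2 * k + 2 + 2 * n * k) = f at heq
  generalize 2 * k ^ 2 + n' - (a3' + a4' + 2 * k + 2 + 2 * n' * k) = f' at heq
  have := digits19 (k := k) (b := n + 1) (b' := n' + 1) (c := 1 + 2 * a3)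
    (c' := 1 + 2 * a3') (d := a4) (d' := a4') (e := 2 * n + 2) (e' := 2 * n' + 2)
    (f := f) (f' := f') (by omega) (by omega) (by omega) (by omega) (by omega) (by omega)
    (by omega) (by omega) (by linarith)
  obtain ⟨e1, e2, e3, e4, e5⟩ := this
  obtain rfl : n = n' := by omega
  obtain rfl : a3 = a3' := by omega
  subst e3
  rfl

/-- For `s ≥ 3`, the cardinalities of `F₄` and `F₆` satisfy
`4·|F₄| = q² − 6q·q₀ + 4q` (i.e. `|F₄| = q²/4 − 3q·q₀/2 + q`) and
`4·|F₆| = q·q₀ − q` (i.e. `|F₆| = q·q₀/4 − q/4`). -/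
theorem stmt_19 (s : ℕ) (hs : 3 ≤ s) (q₀ q : ℕ)
    (hq₀ : q₀ = 2 ^ s) (hq : q = 2 * q₀ ^ 2) :
    4 * (F4 q₀ q).ncard = q ^ 2 - 6 * q * q₀ + 4 * q ∧
    4 * (F6 q₀ q).ncard = q * q₀ - q := by
  have hk : 3 ≤ q₀ := by
    have : 2 ^ 3 ≤ 2 ^ s := Nat.pow_le_pow_right (by norm_num) hs
    omega
  clear hq₀
  subst hq
  rw [F4_eq q₀ hk, F6_eq q₀ hk, Set.ncard_coe_finset, Set.ncard_coe_finset,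
    Finset.card_image_of_injOn (g4_inj q₀), Finset.card_image_of_injOn (g6_inj q₀)]
  obtain ⟨m, rfl⟩ : ∃ m, q₀ = m + 2 := ⟨q₀ - 2, by omega⟩
  simp only [T4, T6, Finset.card_sigma, Finset.card_product, Finset.card_range,
    ← Finset.sum_mul, Nat.add_sub_cancel]
  have ha := sum19a m
  have hb := sum19b (m + 1)
  have hm : m + 2 - 1 = m + 1 := rfl
  rw [hm]
  generalize ∑ n ∈ Finset.range m, (m - n) = A at *
  generalize ∑ n ∈ Finset.range (m + 1), (n + 1) = B at *
  constructor
  · have h7 : 6 * (2 * (m + 2) ^ 2) * (m + 2) ≤ (2 * (m + 2) ^ 2) ^ 2 := by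
      obtain ⟨l, rfl⟩ : ∃ l, m = l + 1 := ⟨m - 1, by omega⟩
      have : 6 * (l + 1 + 2) ≤ 2 * (l + 1 + 2) ^ 2 := by nlinarith
      calc _ = (2 * (l + 1 + 2) ^ 2) * (6 * (l + 1 + 2)) := by ring
        _ ≤ (2 * (l + 1 + 2) ^ 2) * (2 * (l + 1 + 2) ^ 2) := Nat.mul_le_mul_left _ this
        _ = _ := by ring
    zify [h7] at ha ⊢
    linear_combination 4 * (m + 2 : ℤ) ^ 2 * ha
  · have h7 : 2 * (m + 2) ^ 2 ≤ 2 * (m + 2) ^ 2 * (m + 2) := Nat.le_mul_of_pos_right _ (by omega)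
    zify [h7] at hb ⊢
    linear_combination 2 * (m + 2 : ℤ) * hb
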